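/- arXiv:1901.00331 — 2 statements merged into one kernel-verified Lean document; each statement's English description precedes it below -/
import Mathlib

section
/- For every d ≥ 1, every ℓ ≥ 0 and every p ≥ 0 there exists a kernel K : ℝ^d → ℝ of the form K(u) = k(|u|) (a radial kernel) which is infinitely differentiable, nonnegative, integrates to 1, has finite moments μ_K(j) = ∫ |u|^j K(u) du < ∞ for all 0 ≤ j ≤ ℓ, and has the following property: there is a constant c > 0 (depending only on K, d, p) such that for every probability density f₀ on ℝ^d with ∫_{|u|≤1} f₀(u) du < 1 and every invertible real d×d matrix h whose eigenvalues λ₁,…,λ_d (counted with multiplicity, ordered with |λ₁| ≥ … ≥ |λ_d|) are all real, there exists a probability density f on ℝ^d with f(u) = f₀(u) for all |u| ≤ 1 and with K_h ⋆ f(0) ≥ c · |λ₁|^p / ∏_{i=1}^d |λ_i|. -/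
open MeasureTheory Filter

noncomputable def matCLM {d : ℕ} (h : Matrix (Fin d) (Fin d) ℝ) :
    EuclideanSpace ℝ (Fin d) →L[ℝ] EuclideanSpace ℝ (Fin d) :=
  Matrix.toEuclideanCLM (𝕜 := ℝ) h

/-- A probability density on ℝ^d. -/
def IsDensity {d : ℕ} (f : EuclideanSpace ℝ (Fin d) → ℝ) : Prop :=
  (∀ u, 0 ≤ f u) ∧ MeasureTheory.Integrable f ∧ (∫ u, f u) = 1

/-- The KDE convolution `K_h ⋆ f (x') = ∫ |det h|⁻¹ K(h⁻¹(x'-x)) f(x) dx`. -/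
noncomputable def kdeConv {d : ℕ} (K : EuclideanSpace ℝ (Fin d) → ℝ)
    (h : Matrix (Fin d) (Fin d) ℝ) (f : EuclideanSpace ℝ (Fin d) → ℝ)
    (x' : EuclideanSpace ℝ (Fin d)) : ℝ :=
  ∫ x, |h.det|⁻¹ * K (matCLM h⁻¹ (x' - x)) * f x

/-- The j-th absolute moment of a kernel. -/
noncomputable def kMoment {d : ℕ} (K : EuclideanSpace ℝ (Fin d) → ℝ) (j : ℕ) : ℝ :=
  ∫ u, ‖u‖ ^ j * |K u|

/-- For a bump `b`, the shells around the sphere of squared radius `n+1` can be made thin. -/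
lemma spike_exists (d : ℕ) (ℓ : ℕ) (b : ContDiffBump (0 : ℝ)) (hb : b.rOut = 1 / 2) (n : ℕ) :
    ∃ N : ℕ, ∫⁻ u : EuclideanSpace ℝ (Fin d), ENNReal.ofReal
      ((1 + ‖u‖) ^ ℓ * (((n : ℝ) + 1) * b (((N : ℝ) + 1) * (‖u‖ ^ 2 - (n + 1))))) ≤ (2⁻¹ : ENNReal) ^ n := by
  set C : ℝ := (1 + ((n : ℝ) + 2)) ^ ℓ * ((n : ℝ) + 1) with hC
  have key : Tendsto (fun N : ℕ => ∫⁻ u : EuclideanSpace ℝ (Fin d), ENNReal.ofReal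
      ((1 + ‖u‖) ^ ℓ * (((n : ℝ) + 1) * b (((N : ℝ) + 1) * (‖u‖ ^ 2 - (n + 1))))))
      atTop (nhds (∫⁻ u : EuclideanSpace ℝ (Fin d), 0)) := by
    refine tendsto_lintegral_of_dominated_convergence
      ((Metric.closedBall (0 : EuclideanSpace ℝ (Fin d)) (n + 2)).indicator
        (fun _ => ENNReal.ofReal C)) ?_ ?_ ?_ ?_
    · intro N
      refine ENNReal.measurable_ofReal.comp (Continuous.measurable ?_)
      have := b.continuous
      fun_prop
    · intro N
      refine Eventually.of_forall fun u => ?_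
      by_cases hu : u ∈ Metric.closedBall (0 : EuclideanSpace ℝ (Fin d)) (n + 2)
      · rw [Set.indicator_of_mem hu]
        refine ENNReal.ofReal_le_ofReal ?_
        rw [mem_closedBall_zero_iff] at hu
        have h1 : b (((N : ℝ) + 1) * (‖u‖ ^ 2 - (n + 1))) ≤ 1 := b.le_one
        have h2 : 0 ≤ b (((N : ℝ) + 1) * (‖u‖ ^ 2 - (n + 1))) := b.nonneg
        rw [hC]
        have h3 : ((n : ℝ) + 1) * b (((N : ℝ) + 1) * (‖u‖ ^ 2 - (n + 1))) ≤ (n : ℝ) + 1 :=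
          mul_le_of_le_one_right (by positivity) h1
        gcongr
      · rw [Set.indicator_of_notMem hu]
        rw [mem_closedBall_zero_iff, not_le] at hu
        have : b (((N : ℝ) + 1) * (‖u‖ ^ 2 - (n + 1))) = 0 := by
          apply b.zero_of_le_dist
          rw [hb, Real.dist_eq, sub_zero]
          refine le_trans ?_ (le_abs_self _)
          have hn : (0 : ℝ) ≤ n := by positivity
          have hN : (0 : ℝ) ≤ N := by positivity
          have h1 : 1 ≤ ‖u‖ ^ 2 - ((n : ℝ) + 1) := by nlinarith
          nlinarith
        simp [this]
    · rw [lintegral_indicator_const measurableSet_closedBall]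
      exact ENNReal.mul_ne_top ENNReal.ofReal_ne_top measure_closedBall_lt_top.ne
    · have hs : (volume : Measure (EuclideanSpace ℝ (Fin d)))
          (Metric.sphere 0 (Real.sqrt (n + 1))) = 0 :=
        Measure.addHaar_sphere_of_ne_zero _ _ (by positivity)
      have hae := compl_mem_ae_iff.2 hs
      filter_upwards [hae] with u hu
      have hne : ‖u‖ ^ 2 - ((n : ℝ) + 1) ≠ 0 := by
        intro h0
        apply hu
        rw [mem_sphere_zero_iff_norm, ← sub_eq_zero.1 h0, Real.sqrt_sq (norm_nonneg _)]
      apply tendsto_const_nhds.congr'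
      obtain ⟨N0, hN0⟩ := exists_nat_ge (1 / |‖u‖ ^ 2 - ((n : ℝ) + 1)|)
      filter_upwards [eventually_ge_atTop N0] with N hN
      have : b (((N : ℝ) + 1) * (‖u‖ ^ 2 - (n + 1))) = 0 := by
        apply b.zero_of_le_dist
        rw [hb, Real.dist_eq, sub_zero, abs_mul]
        have hpos := abs_pos.2 hne
        rw [div_le_iff₀ hpos] at hN0
        have hN' : (N0 : ℝ) ≤ N := by exact_mod_cast hN
        have : |(N : ℝ) + 1| = N + 1 := abs_of_pos (by positivity)
        rw [this]
        nlinarith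
      simp [this]
  rw [lintegral_zero] at key
  have hpos : (0 : ENNReal) < (2⁻¹ : ENNReal) ^ n := ENNReal.pow_pos (by simp) n
  exact (key.eventually (ge_mem_nhds hpos)).exists

lemma kernel_exists (d : ℕ) (ℓ : ℕ) :
    ∃ (g : ℝ → ℝ), ContDiff ℝ (⊤ : ℕ∞) g ∧ (∀ t, 0 ≤ g t) ∧
      (∀ n : ℕ, (n : ℝ) + 1 ≤ g (n + 1)) ∧
      Integrable (fun u : EuclideanSpace ℝ (Fin d) => (1 + ‖u‖) ^ ℓ * g (‖u‖ ^ 2)) := by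
  let b : ContDiffBump (0 : ℝ) := ⟨1 / 4, 1 / 2, by norm_num, by norm_num⟩
  have hb : b.rOut = 1 / 2 := rfl
  choose N hN using spike_exists d ℓ b hb
  let s : ℕ → ℝ → ℝ := fun n t => ((n : ℝ) + 1) * b (((N n : ℝ) + 1) * (t - (n + 1)))
  have hs0 : ∀ n t, 0 ≤ s n t := fun n t => mul_nonneg (by positivity) b.nonneg
  have hsv : ∀ (n : ℕ) (t : ℝ), t < n → s n t = 0 := by
    intro n t ht
    have : b (((N n : ℝ) + 1) * (t - (n + 1))) = 0 := by
      apply b.zero_of_le_dist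
      rw [hb, Real.dist_eq, sub_zero, abs_mul]
      have h1 : 1 ≤ |t - ((n : ℝ) + 1)| := by
        rw [abs_of_neg (by linarith)]; linarith
      have h2 : 1 ≤ |(N n : ℝ) + 1| := by
        rw [abs_of_pos (by positivity)]; linarith [(N n).cast_nonneg (α := ℝ)]
      nlinarith
    simp [s, this]
  have hfin : ∀ (M : ℕ) (t : ℝ), t < M → ∀ n ∉ Finset.range M, s n t = 0 := by
    intro M t ht n hn
    apply hsv
    have : M ≤ n := by simpa using hn
    have : (M : ℝ) ≤ n := by exact_mod_cast this
    linarith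
  have hsumm : ∀ t, Summable (fun n => s n t) := by
    intro t
    obtain ⟨M, hM⟩ := exists_nat_gt t
    exact summable_of_ne_finset_zero (hfin M t hM)
  have hcs : ∀ n, ContDiff ℝ (⊤ : ℕ∞) (s n) := by
    intro n
    have := b.contDiff (n := (⊤ : ℕ∞))
    exact contDiff_const.mul (this.comp (by fun_prop))
  have hsm : ContDiff ℝ (⊤ : ℕ∞) (fun t => ∑' n, s n t) := by
    rw [contDiff_iff_contDiffAt]
    intro t
    obtain ⟨M, hM⟩ := exists_nat_gt t
    have h1 : ContDiff ℝ (⊤ : ℕ∞) (fun t => ∑ n ∈ Finset.range M, s n t) :=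
      ContDiff.sum fun n _ => hcs n
    refine h1.contDiffAt.congr_of_eventuallyEq ?_
    filter_upwards [gt_mem_nhds hM] with t' ht'
    exact tsum_eq_sum (hfin M t' ht')
  refine ⟨fun t => ∑' n, s n t, hsm, fun t => tsum_nonneg fun n => hs0 n t, ?_, ?_⟩
  · intro n
    have h1 : s n (n + 1) = n + 1 := by
      have : b 0 = 1 := b.one_of_mem_closedBall (Metric.mem_closedBall_self b.rIn_pos.le)
      simp [s, this]
    calc (n : ℝ) + 1 = s n (n + 1) := h1.symm
      _ ≤ _ := (hsumm _).le_tsum n fun j _ => hs0 j _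
  · have hc := hsm.continuous
    have hcont : Continuous (fun u : EuclideanSpace ℝ (Fin d) =>
        (1 + ‖u‖) ^ ℓ * ∑' n, s n (‖u‖ ^ 2)) := by
      have h2 : Continuous (fun u : EuclideanSpace ℝ (Fin d) => ∑' n, s n (‖u‖ ^ 2)) :=
        hc.comp (by fun_prop)
      fun_prop
    refine ⟨hcont.aestronglyMeasurable, ?_⟩
    rw [hasFiniteIntegral_iff_ofReal (Eventually.of_forall fun u => mul_nonneg (by positivity)
      (tsum_nonneg fun n => hs0 n _))]
    have he : ∀ u : EuclideanSpace ℝ (Fin d),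
        ENNReal.ofReal ((1 + ‖u‖) ^ ℓ * ∑' n, s n (‖u‖ ^ 2)) =
        ∑' n, ENNReal.ofReal ((1 + ‖u‖) ^ ℓ * s n (‖u‖ ^ 2)) := by
      intro u
      rw [← tsum_mul_left, ENNReal.ofReal_tsum_of_nonneg]
      · exact fun n => mul_nonneg (by positivity) (hs0 n _)
      · exact (hsumm _).mul_left _
    simp_rw [he]
    rw [lintegral_tsum]
    · refine lt_of_le_of_lt (ENNReal.tsum_le_tsum hN) ?_
      rw [ENNReal.tsum_geometric]
      simp
    · intro n
      refine (ENNReal.measurable_ofReal.comp (Continuous.measurable ?_)).aemeasurable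
      have := (hcs n).continuous
      fun_prop

lemma density_exists {d : ℕ} (G : EuclideanSpace ℝ (Fin d) → ℝ) (hGc : Continuous G)
    (hGnn : ∀ x, 0 ≤ G x) (f₀ : EuclideanSpace ℝ (Fin d) → ℝ) (hf₀ : IsDensity f₀) (m R : ℝ)
    (hm : m = 1 - ∫ u in Metric.closedBall (0 : EuclideanSpace ℝ (Fin d)) 1, f₀ u)
    (hmpos : 0 < m) (x₀ : EuclideanSpace ℝ (Fin d)) (hx1 : 1 < ‖x₀‖) (hx2 : R / m < G x₀) :
    ∃ f : EuclideanSpace ℝ (Fin d) → ℝ, IsDensity f ∧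
      (∀ u, ‖u‖ ≤ 1 → f u = f₀ u) ∧ R ≤ ∫ x, G x * f x := by
  have hU : IsOpen {x : EuclideanSpace ℝ (Fin d) | 1 < ‖x‖ ∧ R / m < G x} :=
    (isOpen_lt continuous_const continuous_norm).inter (isOpen_lt continuous_const hGc)
  obtain ⟨ε, hε, hball⟩ := Metric.nhds_basis_closedBall.mem_iff.1 (hU.mem_nhds ⟨hx1, hx2⟩)
  set B := Metric.closedBall x₀ ε with hB
  set A := Metric.closedBall (0 : EuclideanSpace ℝ (Fin d)) 1 with hA
  have hBm : MeasurableSet B := measurableSet_closedBall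
  have hAm : MeasurableSet A := measurableSet_closedBall
  have hBfin : volume B ≠ ⊤ := measure_closedBall_lt_top.ne
  set V : ℝ := volume.real B with hV
  have hVpos : 0 < V := ENNReal.toReal_pos (Metric.measure_closedBall_pos _ _ hε).ne' hBfin
  obtain ⟨hf0, hfi, hf1⟩ := hf₀
  have hi1 : Integrable (A.indicator f₀) := hfi.indicator hAm
  have hi2 : Integrable (B.indicator (fun _ => m / V)) :=
    (integrable_indicator_iff hBm).2 (integrableOn_const hBfin)
  refine ⟨fun x => A.indicator f₀ x + B.indicator (fun _ => m / V) x,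
    ⟨fun u => add_nonneg (Set.indicator_nonneg (fun x _ => hf0 x) u)
      (Set.indicator_nonneg (fun _ _ => by positivity) u), hi1.add hi2, ?_⟩, ?_, ?_⟩
  · rw [integral_add hi1 hi2, integral_indicator hAm, integral_indicator_const _ hBm, smul_eq_mul,
      ← hV, mul_div_cancel₀ _ hVpos.ne', hm]
    ring
  · intro u hu
    have hu1 : u ∈ A := by rw [hA, mem_closedBall_zero_iff]; exact hu
    have hu2 : u ∉ B := fun hh => absurd (hball hh).1 (not_lt.2 hu)
    simp [hu1, hu2]
  · have hj1 : Integrable (fun x => G x * A.indicator f₀ x) := by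
      have : (fun x => G x * A.indicator f₀ x) = A.indicator (fun x => G x * f₀ x) := by
        ext x; by_cases hx : x ∈ A <;> simp [hx]
      rw [this, integrable_indicator_iff hAm]
      exact hfi.integrableOn.continuousOn_mul hGc.continuousOn (isCompact_closedBall _ _)
    have hj2 : Integrable (fun x => G x * B.indicator (fun _ => m / V) x) := by
      have : (fun x => G x * B.indicator (fun _ => m / V) x) =
          B.indicator (fun x => G x * (m / V)) := by
        ext x; by_cases hx : x ∈ B <;> simp [hx]
      rw [this, integrable_indicator_iff hBm]
      exact (integrableOn_const hBfin).continuousOn_mul hGc.continuousOn (isCompact_closedBall _ _)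
    have hlow : ∫ x, B.indicator (fun _ => R / V) x = R := by
      rw [integral_indicator_const _ hBm, smul_eq_mul, ← hV, mul_div_cancel₀ _ hVpos.ne']
    rw [← hlow]
    refine integral_mono ((integrable_indicator_iff hBm).2 (integrableOn_const hBfin)) ?_ ?_
    · refine (hj1.add hj2).congr (Eventually.of_forall fun x => ?_)
      simp only [Pi.add_apply]
      ring
    · intro x
      have hxx : B.indicator (fun _ => R / V) x ≤
          G x * (A.indicator f₀ x + B.indicator (fun _ => m / V) x) := by
        have hnn : 0 ≤ A.indicator f₀ x := Set.indicator_nonneg (fun x _ => hf0 x) x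
        by_cases hx : x ∈ B
        · rw [Set.indicator_of_mem hx, Set.indicator_of_mem hx]
          have h5 : R / m < G x := (hball hx).2
          calc R / V = R / m * (m / V) := by field_simp
            _ ≤ G x * (m / V) := by gcongr
            _ ≤ _ := by
              refine mul_le_mul_of_nonneg_left ?_ (hGnn x)
              linarith
        · rw [Set.indicator_of_notMem hx, Set.indicator_of_notMem hx, add_zero]
          exact mul_nonneg (hGnn x) hnn
      exact hxx

lemma point_exists {d : ℕ} (g : ℝ → ℝ) (hgn : ∀ n : ℕ, (n : ℝ) + 1 ≤ g (n + 1))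
    (e : EuclideanSpace ℝ (Fin d)) (hne : ‖e‖ = 1) (h : Matrix (Fin d) (Fin d) ℝ)
    (hdet : IsUnit h.det) (I m R : ℝ) (hIpos : 0 < I) :
    ∃ x₀ : EuclideanSpace ℝ (Fin d), 1 < ‖x₀‖ ∧
      R / m < |h.det|⁻¹ * (I⁻¹ * g (‖matCLM h⁻¹ (0 - x₀)‖ ^ 2)) := by
  have hD : 0 < |h.det| := abs_pos.2 hdet.ne_zero
  have hinv : ∀ v, matCLM h⁻¹ (matCLM h v) = v := by
    intro v
    have h1 : matCLM h⁻¹ * matCLM h = 1 := by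
      unfold matCLM
      rw [← map_mul, Matrix.nonsing_inv_mul h hdet, map_one]
    exact DFunLike.congr_fun h1 v
  have hv : 0 < ‖matCLM h e‖ := by
    rw [norm_pos_iff]
    intro h0
    have := hinv e
    rw [h0, map_zero] at this
    rw [← this] at hne
    simp at hne
  obtain ⟨n, hn⟩ := exists_nat_gt (max (1 / ‖matCLM h e‖ ^ 2) (R / m * (|h.det| * I)))
  have hn1 := (le_max_left _ _).trans_lt hn
  have hn2 := (le_max_right _ _).trans_lt hn
  refine ⟨-(matCLM h (Real.sqrt (n + 1) • e)), ?_, ?_⟩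
  · rw [norm_neg, map_smul, norm_smul, Real.norm_of_nonneg (Real.sqrt_nonneg _)]
    rw [div_lt_iff₀ (by positivity)] at hn1
    have h3 : Real.sqrt ((n : ℝ) + 1) ^ 2 = n + 1 := Real.sq_sqrt (by positivity)
    refine lt_of_pow_lt_pow_left₀ 2 (by positivity) ?_
    rw [mul_pow, h3]
    nlinarith [sq_nonneg ‖matCLM h e‖]
  · have h4 : ‖Real.sqrt ((n : ℝ) + 1) • e‖ ^ 2 = n + 1 := by
      rw [norm_smul, hne, mul_one, Real.norm_of_nonneg (Real.sqrt_nonneg _)]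
      exact Real.sq_sqrt (by positivity)
    rw [zero_sub, neg_neg, hinv, h4, ← mul_assoc, ← mul_inv, inv_mul_eq_div,
      lt_div_iff₀ (by positivity)]
    linarith [hgn n]

lemma final_step {d : ℕ} (g : ℝ → ℝ) (hgc : Continuous g) (hg0 : ∀ t, 0 ≤ g t)
    (hgn : ∀ n : ℕ, (n : ℝ) + 1 ≤ g (n + 1))
    (e : EuclideanSpace ℝ (Fin d)) (hne : ‖e‖ = 1) (h : Matrix (Fin d) (Fin d) ℝ)
    (hdet : IsUnit h.det) (I R : ℝ) (hIpos : 0 < I)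
    (f₀ : EuclideanSpace ℝ (Fin d) → ℝ) (hf₀ : IsDensity f₀)
    (hlt : (∫ u in Metric.closedBall (0 : EuclideanSpace ℝ (Fin d)) 1, f₀ u) < 1) :
    ∃ f : EuclideanSpace ℝ (Fin d) → ℝ, IsDensity f ∧
      (∀ u, ‖u‖ ≤ 1 → f u = f₀ u) ∧
      R ≤ kdeConv (fun u => I⁻¹ * g (‖u‖ ^ 2)) h f 0 := by
  obtain ⟨x₀, hx1, hx2⟩ := point_exists g hgn e hne h hdet I
    (1 - ∫ u in Metric.closedBall (0 : EuclideanSpace ℝ (Fin d)) 1, f₀ u) R hIpos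
  have hL := (matCLM h⁻¹).continuous
  exact density_exists (fun x => |h.det|⁻¹ * (I⁻¹ * g (‖matCLM h⁻¹ (0 - x)‖ ^ 2)))
    (continuous_const.mul (continuous_const.mul
      (hgc.comp ((hL.comp (continuous_const.sub continuous_id)).norm.pow 2))))
    (fun x => mul_nonneg (inv_nonneg.2 (abs_nonneg _)) (mul_nonneg (inv_nonneg.2 hIpos.le) (hg0 _)))
    f₀ hf₀ _ R rfl (by linarith) x₀ hx1 hx2

/-- existence of a smooth nonnegative radial kernel with ℓ finite moments
whose KDE estimate at 0, over densities with prescribed behavior on the unit ball,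
can be forced to be at least `c · |λ₁|^p / ∏ |λᵢ|`. -/
theorem kde_lower_bound_kernel_exists (d : ℕ) (hd : 1 ≤ d) (ℓ : ℕ) (p : ℝ) (hp : 0 ≤ p) :
    ∃ (k : ℝ → ℝ) (K : EuclideanSpace ℝ (Fin d) → ℝ),
      (∀ u, K u = k ‖u‖) ∧
      ContDiff ℝ (⊤ : ℕ∞) K ∧
      (∀ u, 0 ≤ K u) ∧
      (∫ u, K u) = 1 ∧
      (∀ j : ℕ, j ≤ ℓ → MeasureTheory.Integrable
        fun u : EuclideanSpace ℝ (Fin d) => ‖u‖ ^ j * K u) ∧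
      ∃ c : ℝ, 0 < c ∧
        ∀ f₀ : EuclideanSpace ℝ (Fin d) → ℝ, IsDensity f₀ →
          (∫ u in Metric.closedBall (0 : EuclideanSpace ℝ (Fin d)) 1, f₀ u) < 1 →
          ∀ (h : Matrix (Fin d) (Fin d) ℝ) (lam : Fin d → ℝ),
            IsUnit h.det →
            h.charpoly = ∏ i : Fin d, (Polynomial.X - Polynomial.C (lam i)) →
            (∀ i j : Fin d, i ≤ j → |lam j| ≤ |lam i|) →
            ∃ f : EuclideanSpace ℝ (Fin d) → ℝ, IsDensity f ∧
              (∀ u, ‖u‖ ≤ 1 → f u = f₀ u) ∧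
              c * |lam ⟨0, hd⟩| ^ p / (∏ i, |lam i|) ≤ kdeConv K h f 0 := by
  obtain ⟨g, hg, hg0, hgn, hgi⟩ := kernel_exists d ℓ
  obtain ⟨e, hne⟩ : ∃ e : EuclideanSpace ℝ (Fin d), ‖e‖ = 1 :=
    ⟨EuclideanSpace.single ⟨0, hd⟩ 1, by simp⟩
  have hgc := hg.continuous
  have hG : ContDiff ℝ (⊤ : ℕ∞) (fun u : EuclideanSpace ℝ (Fin d) => g (‖u‖ ^ 2)) :=
    hg.comp (contDiff_id.norm_sq ℝ)
  have hmom : ∀ j : ℕ, j ≤ ℓ → Integrable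
      fun u : EuclideanSpace ℝ (Fin d) => ‖u‖ ^ j * g (‖u‖ ^ 2) := by
    intro j hj
    refine hgi.mono' (by have := hG.continuous; exact Continuous.aestronglyMeasurable (by fun_prop)) ?_
    refine Eventually.of_forall fun u => ?_
    rw [Real.norm_of_nonneg (mul_nonneg (by positivity) (hg0 _))]
    refine mul_le_mul_of_nonneg_right ?_ (hg0 _)
    have h0 := norm_nonneg u
    calc ‖u‖ ^ j ≤ (1 + ‖u‖) ^ j := by gcongr; linarith
      _ ≤ (1 + ‖u‖) ^ ℓ := pow_le_pow_right₀ (by linarith) hj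
  have hint : Integrable fun u : EuclideanSpace ℝ (Fin d) => g (‖u‖ ^ 2) := by
    simpa using hmom 0 (Nat.zero_le _)
  set I : ℝ := ∫ u : EuclideanSpace ℝ (Fin d), g (‖u‖ ^ 2) with hI
  have hIpos : 0 < I := by
    rw [hI, integral_pos_iff_support_of_nonneg (fun u => hg0 _) hint]
    refine IsOpen.measure_pos _ hG.continuous.isOpen_support ⟨e, ?_⟩
    have := hgn 0
    simp only [Function.mem_support, hne]
    norm_num at this ⊢
    linarith
  refine ⟨fun t => I⁻¹ * g (t ^ 2), fun u => I⁻¹ * g (‖u‖ ^ 2), fun u => rfl,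
    contDiff_const.mul hG, fun u => mul_nonneg (by positivity) (hg0 _), ?_, ?_, 1, one_pos, ?_⟩
  · rw [integral_const_mul, ← hI, inv_mul_cancel₀ hIpos.ne']
  · intro j hj
    refine ((hmom j hj).const_mul I⁻¹).congr (Eventually.of_forall fun u => ?_)
    simp only
    ring
  intro f₀ hf₀ hlt h lam hdet _ _
  exact final_step g hgc hg0 hgn e hne h hdet I _ hIpos f₀ hf₀ hlt
end

section
/- Fix integers d ≥ 1, ℓ ≥ 0 and a real p ≥ 0, let Ψ(r) = exp(−1/(1 − r²)) · 1_{(−1,1)}(r) be the standard bump function, and define k : ℝ → ℝ by k(r) = Σ_{n ∈ ℤ, |n| ≥ 2} |n|^{-p} · Ψ( 2 |n|^{p+ℓ+d+1} (r − n) ). Then k is well-defined (at every point at most one summand is nonzero), nonnegative, and infinitely differentiable on ℝ. -/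
open Filter

/-- The standard bump function `Ψ(r) = exp(−1/(1−r²))·1_{(−1,1)}(r)`. -/
noncomputable def stdBump (r : ℝ) : ℝ :=
  if r ∈ Set.Ioo (-1 : ℝ) 1 then Real.exp (-1 / (1 - r ^ 2)) else 0

/-- The spiky radial profile `k(r) = Σ_{|n|≥2} |n|^{-p} Ψ(2|n|^{p+ℓ+d+1}(r−n))`. -/
noncomputable def spikyProfile (d ℓ : ℕ) (p : ℝ) (r : ℝ) : ℝ :=
  ∑' n : {n : ℤ // 2 ≤ |n|},
    |((n : ℤ) : ℝ)| ^ (-p) *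
      stdBump (2 * |((n : ℤ) : ℝ)| ^ (p + ℓ + d + 1) * (r - ((n : ℤ) : ℝ)))

theorem stdBump_eq_glue (r : ℝ) : stdBump r = expNegInvGlue (1 - r ^ 2) := by
  unfold stdBump expNegInvGlue
  by_cases h : r ∈ Set.Ioo (-1 : ℝ) 1
  · have h2 : ¬ (1 - r ^ 2 ≤ 0) := by
      have := h.1
      have := h.2
      nlinarith
    rw [if_pos h, if_neg h2, neg_div, one_div]
  · have h2 : 1 - r ^ 2 ≤ 0 := by
      by_contra hc
      exact h (abs_lt.1 ((sq_lt_one_iff_abs_lt_one r).1 (by linarith)))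
    rw [if_neg h, if_pos h2]

theorem stdBump_nonneg' (r : ℝ) : 0 ≤ stdBump r := by
  rw [stdBump_eq_glue]
  exact expNegInvGlue.nonneg _

theorem stdBump_contDiff : ContDiff ℝ (⊤ : ℕ∞) stdBump := by
  have : stdBump = fun r => expNegInvGlue (1 - r ^ 2) := funext stdBump_eq_glue
  rw [this]
  exact expNegInvGlue.contDiff.comp (by fun_prop)

theorem spike_near (d ℓ : ℕ) (p : ℝ) (hp : 0 ≤ p) (r : ℝ) (n : ℤ) (hn : 2 ≤ |n|)
    (h : |(n : ℝ)| ^ (-p) *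
          stdBump (2 * |(n : ℝ)| ^ (p + ℓ + d + 1) * (r - (n : ℝ))) ≠ 0) :
    |r - n| < 1 / 2 := by
  have h1 := right_ne_zero_of_mul h
  unfold stdBump at h1
  have h2 : 2 * |(n : ℝ)| ^ (p + ℓ + d + 1) * (r - (n : ℝ)) ∈ Set.Ioo (-1 : ℝ) 1 := by
    by_contra hc
    exact h1 (if_neg hc)
  have h3 := abs_lt.2 h2
  have hn' : (2 : ℝ) ≤ |(n : ℝ)| := by exact_mod_cast hn
  have h4 : 1 ≤ |(n : ℝ)| ^ (p + ℓ + d + 1) :=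
    Real.one_le_rpow (by linarith) (by positivity)
  rw [abs_mul, abs_of_pos (by linarith)] at h3
  nlinarith [abs_nonneg (r - n)]

/-- the spiky profile is well-defined (at every point at most one
summand is nonzero), nonnegative and infinitely differentiable. -/
theorem spikyProfile_wellDefined_nonneg_smooth (d ℓ : ℕ) (hd : 1 ≤ d)
    (p : ℝ) (hp : 0 ≤ p) :
    (∀ r : ℝ, Set.Subsingleton {n : ℤ | 2 ≤ |n| ∧
        |(n : ℝ)| ^ (-p) *
          stdBump (2 * |(n : ℝ)| ^ (p + ℓ + d + 1) * (r - (n : ℝ))) ≠ 0}) ∧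
    (∀ r : ℝ, 0 ≤ spikyProfile d ℓ p r) ∧
    ContDiff ℝ (⊤ : ℕ∞) (spikyProfile d ℓ p) := by
  refine ⟨?_, ?_, ?_⟩
  · rintro r m ⟨hm, hm'⟩ n ⟨hn, hn'⟩
    have h1 := abs_lt.1 (spike_near d ℓ p hp r m hm hm')
    have h2 := abs_lt.1 (spike_near d ℓ p hp r n hn hn')
    have h3 : (m : ℝ) < n + 1 := by linarith
    have h4 : (n : ℝ) < m + 1 := by linarith
    have h5 : m < n + 1 := by exact_mod_cast h3
    have h6 : n < m + 1 := by exact_mod_cast h4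
    omega
  · intro r
    exact tsum_nonneg fun n => mul_nonneg (by positivity) (stdBump_nonneg' _)
  · rw [contDiff_iff_contDiffAt]
    intro x
    let S : Finset {n : ℤ // 2 ≤ |n|} :=
      (Finset.Icc (⌊x⌋ - 1) (⌊x⌋ + 2)).subtype (fun n => 2 ≤ |n|)
    have hS : spikyProfile d ℓ p =ᶠ[nhds x] fun r => ∑ n ∈ S, |((n : ℤ) : ℝ)| ^ (-p) *
        stdBump (2 * |((n : ℤ) : ℝ)| ^ (p + ℓ + d + 1) * (r - ((n : ℤ) : ℝ))) := by
      filter_upwards [Metric.ball_mem_nhds x (show (0 : ℝ) < 1 / 2 by norm_num)] with r hr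
      refine tsum_eq_sum fun n hn => ?_
      by_contra hc
      have h1 := abs_lt.1 (spike_near d ℓ p hp r n n.2 hc)
      rw [Metric.mem_ball, Real.dist_eq] at hr
      have h2 := abs_lt.1 hr
      have h3 := Int.floor_le x
      have h4 := Int.lt_floor_add_one x
      apply hn
      simp only [S, Finset.mem_subtype, Finset.mem_Icc]
      have h5 : ((⌊x⌋ : ℤ) : ℝ) - 1 < (n : ℤ) := by linarith
      have h6 : ((n : ℤ) : ℝ) < (⌊x⌋ : ℤ) + 2 := by linarith
      have h7 : ⌊x⌋ - 1 < (n : ℤ) := by exact_mod_cast h5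
      have h8 : (n : ℤ) < ⌊x⌋ + 2 := by exact_mod_cast h6
      omega
    refine ContDiffAt.congr_of_eventuallyEq ?_ hS
    apply ContDiff.contDiffAt
    refine ContDiff.sum fun n _ => ?_
    exact contDiff_const.mul (stdBump_contDiff.comp (by fun_prop))
end
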